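/- arXiv:1402.5509 — 3 statements merged into one kernel-verified Lean document; each statement's English description precedes it below -/
import Mathlib

section
/- Let K be an algebraically closed field and n ≥ 2. Let R_Y = K[S_{ij} : 1 ≤ i < j ≤ n+2] and let I_Y ⊆ R_Y be the ideal generated by all Plücker relations S_{ij}S_{kl} − S_{ik}S_{jl} + S_{il}S_{jk} for 1 ≤ i < j < k < l ≤ n+2. Then in the quotient ring R_Y/I_Y the residue class of the variable S_{n+1,n+2} is a prime element, and it does not divide the residue class of any variable S_{ij} with (i,j) ≠ (n+1, n+2). -/
open MvPolynomial

/-- The index set of the polynomial ring `R_Y = K[S_{ij} : 1 ≤ i < j ≤ n+2]`. -/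
abbrev PairIdx (n : ℕ) : Type := {p : ℕ × ℕ // 1 ≤ p.1 ∧ p.1 < p.2 ∧ p.2 ≤ n + 2}

/-- The variable `S_{ab}` of `R_Y` (junk value `0` for invalid index pairs). -/
noncomputable def S (K : Type*) [Field K] (n a b : ℕ) :
    MvPolynomial (PairIdx n) K :=
  if h : 1 ≤ a ∧ a < b ∧ b ≤ n + 2 then X ⟨(a, b), h⟩ else 0

/-- The ideal `I_Y ⊆ R_Y` generated by all Plücker relations
`S_{ij}S_{kl} − S_{ik}S_{jl} + S_{il}S_{jk}` for `1 ≤ i < j < k < l ≤ n+2`. -/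
noncomputable def IY (K : Type*) [Field K] (n : ℕ) :
    Ideal (MvPolynomial (PairIdx n) K) :=
  Ideal.span {x : MvPolynomial (PairIdx n) K | ∃ i j k l : ℕ,
      1 ≤ i ∧ i < j ∧ j < k ∧ k < l ∧ l ≤ n + 2 ∧
      x = S K n i j * S K n k l - S K n i k * S K n j l + S K n i l * S K n j k}

namespace Pl

open scoped MonomialOrder

def vx (j : ℕ) : ℕᵒᵈ := OrderDual.toDual (2 * j + 1)
def vy (j : ℕ) : ℕᵒᵈ := OrderDual.toDual (2 * j)

lemma vx_inj {i j : ℕ} : vx i = vx j ↔ i = j := by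
  simp [vx]

lemma vy_inj {i j : ℕ} : vy i = vy j ↔ i = j := by
  simp [vy]

lemma vx_ne_vy (i j : ℕ) : vx i ≠ vy j := by
  intro h
  have h2 : 2 * i + 1 = 2 * j := OrderDual.toDual.injective h
  omega

noncomputable def yy (K : Type*) [Field K] (n i : ℕ) : MvPolynomial ℕᵒᵈ K :=
  if i ≤ n then X (vy i) else 0

noncomputable def gg (K : Type*) [Field K] (n i j : ℕ) : MvPolynomial ℕᵒᵈ K :=
  X (vx j) * yy K n i - X (vx i) * yy K n j

noncomputable def EE (i j : ℕ) : ℕᵒᵈ →₀ ℕ := Finsupp.single (vx j) 1 + Finsupp.single (vy i) 1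

noncomputable abbrev mo : MonomialOrder ℕᵒᵈ := MonomialOrder.lex

lemma EE_lt {i j : ℕ} (h : i < j) : EE j i ≺[mo] EE i j := by
  rw [MonomialOrder.lex_lt_iff, Finsupp.Lex.lt_iff]
  refine ⟨vx j, ?_, ?_⟩
  · intro k hk
    have hk' : 2 * j + 1 < OrderDual.ofDual k := hk
    have a1 : vx j ≠ k := by rintro rfl; simp [vx] at hk'
    have a2 : vx i ≠ k := by rintro rfl; simp [vx] at hk'; omega
    have a3 : vy j ≠ k := by rintro rfl; simp [vy] at hk'
    have a4 : vy i ≠ k := by rintro rfl; simp [vy] at hk'; omega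
    simp [EE, Finsupp.single_apply, a1, a2, a3, a4]
  · have a2 : i ≠ j := by omega
    simp [EE, Finsupp.single_apply, vx_inj, (vx_ne_vy _ _).symm, a2]

lemma XX_eq (K : Type*) [Field K] (i j : ℕ) :
    (X (vx j) * X (vy i) : MvPolynomial ℕᵒᵈ K) = monomial (EE i j) 1 := by
  simp [X, monomial_mul, EE]

lemma gg_deg (K : Type*) [Field K] {n i j : ℕ} (hi : i ≤ n) (h : i < j) :
    mo.degree (gg K n i j) = EE i j ∧ mo.Monic (gg K n i j) := by
  classical
  have key : mo.degree (X (vx i) * yy K n j) ≺[mo] mo.degree (X (vx j) * yy K n i) ∨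
      X (vx i) * yy K n j = 0 := by
    by_cases hj : j ≤ n
    · left
      simp only [yy, hi, hj, if_true, XX_eq, MonomialOrder.degree_monomial, one_ne_zero, if_false]
      exact EE_lt h
    · right; simp [yy, hj]
  have h1 : mo.degree (X (vx j) * yy K n i) = EE i j := by
    simp only [yy, hi, if_true, XX_eq, MonomialOrder.degree_monomial, one_ne_zero, if_false]
  have h2 : mo.leadingCoeff (X (vx j) * yy K n i) = 1 := by
    simp only [yy, hi, if_true, XX_eq, MonomialOrder.leadingCoeff_monomial]
  rcases key with hk | hk
  · refine ⟨?_, ?_⟩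
    · rw [gg, MonomialOrder.degree_sub_of_lt hk, h1]
    · rw [MonomialOrder.Monic, gg, MonomialOrder.leadingCoeff_sub_of_lt hk, h2]
  · rw [gg, hk, sub_zero]
    exact ⟨h1, h2⟩

noncomputable def phi (K : Type*) [Field K] (n : ℕ) :
    MvPolynomial (PairIdx n) K →ₐ[K] MvPolynomial ℕᵒᵈ K :=
  aeval (fun p => gg K n p.1.1 p.1.2)

def Std {n : ℕ} (m : PairIdx n →₀ ℕ) : Prop :=
  (∀ p ∈ m.support, p.1.1 ≤ n) ∧
  ∀ p ∈ m.support, ∀ q ∈ m.support, ¬ (p.1.1 < q.1.1 ∧ q.1.2 < p.1.2)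

noncomputable def ex {n : ℕ} (m : PairIdx n →₀ ℕ) : ℕᵒᵈ →₀ ℕ :=
  ∑ p ∈ m.support, m p • EE p.1.1 p.1.2

lemma ex_eq {n : ℕ} (m : PairIdx n →₀ ℕ) :
    ex m = Finsupp.linearCombination ℕ (fun p : PairIdx n => EE p.1.1 p.1.2) m := by
  rw [Finsupp.linearCombination_apply]; rfl

lemma ex_add {n : ℕ} (m m' : PairIdx n →₀ ℕ) : ex (m + m') = ex m + ex m' := by
  simp only [ex_eq, map_add]

lemma phi_monomial (K : Type*) [Field K] {n : ℕ} {m : PairIdx n →₀ ℕ} (hm : Std m) :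
    mo.degree (phi K n (monomial m 1)) = ex m ∧ mo.Monic (phi K n (monomial m 1)) := by
  have e : phi K n (monomial m 1) = ∏ p ∈ m.support, gg K n p.1.1 p.1.2 ^ m p := by
    rw [phi, aeval_monomial]; simp [Finsupp.prod]
  have hp : ∀ p ∈ m.support, mo.Monic (gg K n p.1.1 p.1.2) := fun p hp =>
    (gg_deg K (hm.1 p hp) p.2.2.1).2
  have hpp : ∀ p ∈ m.support, mo.Monic (gg K n p.1.1 p.1.2 ^ m p) := fun p h => (hp p h).pow
  rw [e]
  refine ⟨?_, MonomialOrder.Monic.prod hpp⟩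
  rw [MonomialOrder.degree_prod (fun p h => (hpp p h).ne_zero)]
  refine Finset.sum_congr rfl fun p h => ?_
  rw [MonomialOrder.degree_pow, (gg_deg K (hm.1 p h) p.2.2.1).1]

lemma ex_vx {n : ℕ} (m : PairIdx n →₀ ℕ) (j : ℕ) :
    ex m (vx j) ≠ 0 ↔ ∃ p ∈ m.support, p.1.2 = j := by
  simp only [ex, Finsupp.finsetSum_apply, ne_eq, Finset.sum_eq_zero_iff, not_forall]
  simp only [EE, Finsupp.smul_apply, Finsupp.add_apply, Finsupp.single_apply, vx_inj,
    (vx_ne_vy _ _).symm, if_false, add_zero, smul_eq_mul, mul_eq_zero, not_or, Finsupp.mem_support_iff]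
  constructor
  · rintro ⟨p, hp, -, h⟩; exact ⟨p, hp, by simpa using h⟩
  · rintro ⟨p, hp, h⟩; exact ⟨p, hp, hp, by simp [h]⟩

lemma ex_vy {n : ℕ} (m : PairIdx n →₀ ℕ) (i : ℕ) :
    ex m (vy i) ≠ 0 ↔ ∃ p ∈ m.support, p.1.1 = i := by
  simp only [ex, Finsupp.finsetSum_apply, ne_eq, Finset.sum_eq_zero_iff, not_forall]
  simp only [EE, Finsupp.smul_apply, Finsupp.add_apply, Finsupp.single_apply, vy_inj,
    (vx_ne_vy _ _), if_false, zero_add, smul_eq_mul, mul_eq_zero, not_or, Finsupp.mem_support_iff]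
  constructor
  · rintro ⟨p, hp, -, h⟩; exact ⟨p, hp, by simpa using h⟩
  · rintro ⟨p, hp, h⟩; exact ⟨p, hp, hp, by simp [h]⟩

lemma exists_top {n : ℕ} {m : PairIdx n →₀ ℕ} (hm : Std m) (h0 : m ≠ 0) :
    ∃ p ∈ m.support, ∀ q ∈ m.support, q.1.1 ≤ p.1.1 ∧ q.1.2 ≤ p.1.2 := by
  obtain ⟨p, hp, hmax⟩ := m.support.exists_max_image (fun p => p.1.1 + p.1.2)
    (Finsupp.support_nonempty_iff.mpr h0)
  refine ⟨p, hp, fun q hq => ?_⟩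
  have h1 := hm.2 p hp q hq
  have h2 := hm.2 q hq p hp
  have h3 := hmax q hq
  omega

lemma Std.of_le {n : ℕ} {m m' : PairIdx n →₀ ℕ} (h : m' ≤ m) (hm : Std m) : Std m' := by
  have hs : m'.support ⊆ m.support := Finsupp.support_mono h
  exact ⟨fun p hp => hm.1 p (hs hp), fun p hp q hq => hm.2 p (hs hp) q (hs hq)⟩

lemma ex_inj {n : ℕ} : ∀ (k : ℕ) (m m' : PairIdx n →₀ ℕ), m.degree = k → Std m → Std m' →
    ex m = ex m' → m = m' := by
  have hz : ∀ m : PairIdx n →₀ ℕ, ex m = 0 → m = 0 := by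
    intro m h
    by_contra h0
    obtain ⟨p, hp⟩ := Finsupp.support_nonempty_iff.mpr h0
    exact (ex_vx m p.1.2).mpr ⟨p, hp, rfl⟩ (by rw [h]; rfl)
  have hz' : ex (0 : PairIdx n →₀ ℕ) = 0 := by simp [ex]
  intro k
  induction k with
  | zero =>
    intro m m' hd _ _ he
    rw [Finsupp.degree_eq_zero_iff] at hd
    subst hd
    rw [hz'] at he
    exact (hz m' he.symm).symm
  | succ k ih =>
    intro m m' hd hm hm' he
    have h0 : m ≠ 0 := by rintro rfl; simp at hd
    have h0' : m' ≠ 0 := by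
      rintro rfl; exact h0 (hz m (by rw [he, hz']))
    obtain ⟨p, hp, pm⟩ := exists_top hm h0
    obtain ⟨p', hp', pm'⟩ := exists_top hm' h0'
    obtain ⟨q1, hq1, e1⟩ := (ex_vx m' p.1.2).mp (he ▸ (ex_vx m p.1.2).mpr ⟨p, hp, rfl⟩)
    obtain ⟨q2, hq2, e2⟩ := (ex_vy m' p.1.1).mp (he ▸ (ex_vy m p.1.1).mpr ⟨p, hp, rfl⟩)
    obtain ⟨q3, hq3, e3⟩ := (ex_vx m p'.1.2).mp (he ▸ (ex_vx m' p'.1.2).mpr ⟨p', hp', rfl⟩)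
    obtain ⟨q4, hq4, e4⟩ := (ex_vy m p'.1.1).mp (he ▸ (ex_vy m' p'.1.1).mpr ⟨p', hp', rfl⟩)
    have b1 := (pm' q1 hq1).2
    have b2 := (pm' q2 hq2).1
    have b3 := (pm q3 hq3).2
    have b4 := (pm q4 hq4).1
    have hpp : p = p' := Subtype.ext (Prod.ext (by omega) (by omega))
    subst hpp
    have l1 : Finsupp.single p 1 ≤ m := by
      rw [Finsupp.single_le_iff]; exact Nat.one_le_iff_ne_zero.mpr (Finsupp.mem_support_iff.mp hp)
    have l2 : Finsupp.single p 1 ≤ m' := by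
      rw [Finsupp.single_le_iff]; exact Nat.one_le_iff_ne_zero.mpr (Finsupp.mem_support_iff.mp hp')
    obtain ⟨a, rfl⟩ := exists_add_of_le l1
    obtain ⟨b, rfl⟩ := exists_add_of_le l2
    rw [ex_add, ex_add] at he
    have := ih a b (by simp [Finsupp.degree_single] at hd; omega)
      (hm.of_le le_add_self) (hm'.of_le le_add_self) (add_left_cancel he)
    rw [this]

lemma indep (K : Type*) [Field K] {n : ℕ} (q : MvPolynomial (PairIdx n) K)
    (hq : q ∈ restrictSupport K {m : PairIdx n →₀ ℕ | Std m}) (h : phi K n q = 0) : q = 0 := by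
  rw [mem_restrictSupport_iff] at hq
  by_contra h0
  obtain ⟨m, hm, hmax⟩ := q.support.exists_max_image (fun m => mo.toSyn (ex m))
    (support_nonempty.mpr h0)
  have hc : coeff (ex m) (phi K n q) = coeff m q := by
    conv_lhs => rw [q.as_sum, map_sum, coeff_sum]
    rw [Finset.sum_eq_single m]
    · have := (phi_monomial K (hq hm))
      rw [show monomial m (coeff m q) = coeff m q • monomial m (1 : K) by
        rw [smul_monomial]; simp, map_smul, coeff_smul, ← this.1, this.2.coeff_degree]
      simp
    · intro b hb hne
      have := (phi_monomial K (hq hb))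
      rw [show monomial b (coeff b q) = coeff b q • monomial b (1 : K) by
        rw [smul_monomial]; simp, map_smul, coeff_smul, mo.coeff_eq_zero_of_lt, smul_zero]
      rw [this.1]
      refine lt_of_le_of_ne (hmax b hb) fun heq => hne ?_
      exact ex_inj _ b m rfl (hq hb) (hq hm) (mo.toSyn.injective heq)
    · intro hh; exact absurd hm hh
  rw [h, coeff_zero] at hc
  exact (mem_support_iff.mp hm) hc.symm

noncomputable def JJ (K : Type*) [Field K] (n : ℕ) : Ideal (MvPolynomial (PairIdx n) K) :=
  IY K n ⊔ Ideal.span {S K n (n + 1) (n + 2)}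

lemma S_eq (K : Type*) [Field K] {n a b : ℕ} (h : 1 ≤ a ∧ a < b ∧ b ≤ n + 2) :
    S K n a b = X ⟨(a, b), h⟩ := by rw [S, dif_pos h]

noncomputable def wt {n : ℕ} : (PairIdx n →₀ ℕ) →+ ℕ :=
  Finsupp.liftAddHom (fun p => (AddMonoidHom.mulRight ((p.1.2 - p.1.1) ^ 2)))

lemma wt_single {n : ℕ} (p : PairIdx n) : wt (Finsupp.single p 1) = (p.1.2 - p.1.1) ^ 2 := by
  simp [wt]

lemma mon_eq (K : Type*) [Field K] {n : ℕ} (s t : PairIdx n) (m0 : PairIdx n →₀ ℕ) :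
    monomial (Finsupp.single s 1 + Finsupp.single t 1 + m0) (1 : K)
        = X s * X t * monomial m0 1 := by
  simp [X, monomial_mul]

set_option maxHeartbeats 1000000 in
lemma straight (K : Type*) [Field K] {n : ℕ} : ∀ (k : ℕ) (m : PairIdx n →₀ ℕ), wt m = k →
    (monomial m (1 : K)) ∈ (JJ K n).restrictScalars K ⊔
      restrictSupport K {m : PairIdx n →₀ ℕ | Std m} := by
  intro k
  induction k using Nat.strong_induction_on with
  | _ k ih =>
  intro m hw
  by_cases hs : Std m
  · exact Submodule.mem_sup_right (by simp [hs])
  by_cases h1 : ∀ p ∈ m.support, p.1.1 ≤ n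
  · have h2 : ¬ ∀ p ∈ m.support, ∀ q ∈ m.support, ¬ (p.1.1 < q.1.1 ∧ q.1.2 < p.1.2) :=
      fun h => hs ⟨h1, h⟩
    push Not at h2
    obtain ⟨p, hp, q, hq, ha, hb⟩ := h2
    obtain ⟨⟨i, l⟩, hil⟩ := p
    obtain ⟨⟨j, k'⟩, hjk⟩ := q
    simp only at ha hb hil hjk
    set p : PairIdx n := ⟨(i, l), hil⟩ with hpdef
    set q : PairIdx n := ⟨(j, k'), hjk⟩ with hqdef
    have hne : p ≠ q := by
      intro h
      have := congrArg (fun x : PairIdx n => x.1.1) h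
      simp [p, q] at this; omega
    have l1 : Finsupp.single p 1 + Finsupp.single q 1 ≤ m := by
      intro r
      have e1 : m p ≠ 0 := Finsupp.mem_support_iff.mp hp
      have e2 : m q ≠ 0 := Finsupp.mem_support_iff.mp hq
      rw [Finsupp.add_apply, Finsupp.single_apply, Finsupp.single_apply]
      split_ifs with c1 c2 c2
      · exact absurd (c1.trans c2.symm) hne
      · subst c1; omega
      · subst c2; omega
      · omega
    obtain ⟨m0, rfl⟩ := exists_add_of_le l1
    have hik : 1 ≤ i ∧ i < k' ∧ k' ≤ n + 2 := by omega
    have hjl : 1 ≤ j ∧ j < l ∧ l ≤ n + 2 := by omega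
    have hij : 1 ≤ i ∧ i < j ∧ j ≤ n + 2 := by omega
    have hkl : 1 ≤ k' ∧ k' < l ∧ l ≤ n + 2 := by omega
    let a : PairIdx n := ⟨(i, k'), hik⟩
    let b : PairIdx n := ⟨(j, l), hjl⟩
    let c : PairIdx n := ⟨(i, j), hij⟩
    let d : PairIdx n := ⟨(k', l), hkl⟩
    simp only [map_add, wt_single] at hw
    obtain ⟨u, rfl⟩ := Nat.exists_eq_add_of_lt hij.2.1
    obtain ⟨v, rfl⟩ := Nat.exists_eq_add_of_lt hjk.2.1
    obtain ⟨w, rfl⟩ := Nat.exists_eq_add_of_lt hkl.2.1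
    have t1 : i + u + 1 + v + 1 + w + 1 - i = u + v + w + 3 := by omega
    have t2 : i + u + 1 + v + 1 - (i + u + 1) = v + 1 := by omega
    have t3 : i + u + 1 + v + 1 - i = u + v + 2 := by omega
    have t4 : i + u + 1 + v + 1 + w + 1 - (i + u + 1) = v + w + 2 := by omega
    have t5 : i + u + 1 - i = u + 1 := by omega
    have t6 : i + u + 1 + v + 1 + w + 1 - (i + u + 1 + v + 1) = w + 1 := by omega
    simp only [p, q, t1, t2] at hw
    have r1 := ih (wt (Finsupp.single a 1 + Finsupp.single b 1 + m0)) (by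
      simp only [map_add, wt_single, a, b, t3, t4]; nlinarith) _ rfl
    have r2 := ih (wt (Finsupp.single c 1 + Finsupp.single d 1 + m0)) (by
      simp only [map_add, wt_single, c, d, t5, t6]; nlinarith) _ rfl
    have rel : (X c * X d - X a * X b + X p * X q : MvPolynomial (PairIdx n) K) ∈ JJ K n := by
      refine Ideal.mem_sup_left (Ideal.subset_span ⟨i, _, _, _, hil.1, hij.2.1, hjk.2.1, hkl.2.1, hil.2.2, ?_⟩)
      rw [S_eq K hij, S_eq K hkl, S_eq K hik, S_eq K hjl, S_eq K hil, S_eq K hjk]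
    have rel2 := (JJ K n).mul_mem_right (monomial m0 1) rel
    have mm : ∀ s t : PairIdx n, (monomial (Finsupp.single s 1 + Finsupp.single t 1 + m0) (1 : K))
        = X s * X t * monomial m0 1 := by
      intro s t; exact mon_eq K s t m0
    rw [mm] at r1 r2 ⊢
    have : X p * X q * monomial m0 (1 : K) =
        (X c * X d - X a * X b + X p * X q) * monomial m0 1 +
        (X a * X b * monomial m0 1 - X c * X d * monomial m0 1) := by ring
    rw [this]
    exact Submodule.add_mem _ (Submodule.mem_sup_left rel2) (Submodule.sub_mem _ r1 r2)
  · push Not at h1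
    obtain ⟨p, hp, hgt⟩ := h1
    have hpe : p = ⟨(n + 1, n + 2), by omega⟩ := by
      apply Subtype.ext
      have := p.2
      apply Prod.ext <;> simp <;> omega
    have l1 : Finsupp.single p 1 ≤ m := by
      rw [Finsupp.single_le_iff]; exact Nat.one_le_iff_ne_zero.mpr (Finsupp.mem_support_iff.mp hp)
    obtain ⟨m0, rfl⟩ := exists_add_of_le l1
    refine Submodule.mem_sup_left ?_
    have : monomial (Finsupp.single p 1 + m0) (1 : K) = X p * monomial m0 1 := by
      simp [X, monomial_mul]
    rw [this]
    refine (JJ K n).mul_mem_right _ (Ideal.mem_sup_right (Ideal.subset_span ?_))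
    rw [S_eq K (by omega), hpe]; rfl

lemma phi_S (K : Type*) [Field K] {n a b : ℕ} (h : 1 ≤ a ∧ a < b ∧ b ≤ n + 2) :
    phi K n (S K n a b) = gg K n a b := by
  rw [S_eq K h, phi, aeval_X]

lemma JJ_eq (K : Type*) [Field K] (n : ℕ) : JJ K n = RingHom.ker (phi K n) := by
  have hle : JJ K n ≤ RingHom.ker (phi K n) := by
    refine sup_le (Ideal.span_le.mpr ?_) (Ideal.span_le.mpr ?_)
    · rintro x ⟨i, j, k, l, h1, h2, h3, h4, h5, rfl⟩
      rw [SetLike.mem_coe, RingHom.mem_ker]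
      simp only [map_add, map_sub, map_mul]
      rw [phi_S K (by omega), phi_S K (by omega), phi_S K (by omega), phi_S K (by omega),
        phi_S K (by omega), phi_S K (by omega)]
      simp only [gg]; ring
    · rintro x rfl
      rw [SetLike.mem_coe, RingHom.mem_ker, phi_S K (by omega)]
      simp [gg, yy]
  refine le_antisymm hle fun p hp => ?_
  have hpW : p ∈ (JJ K n).restrictScalars K ⊔
      restrictSupport K {m : PairIdx n →₀ ℕ | Std m} := by
    rw [p.as_sum]
    refine Submodule.sum_mem _ fun m _ => ?_
    rw [show monomial m (coeff m p) = coeff m p • monomial m (1 : K) by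
        rw [smul_monomial]; simp]
    exact Submodule.smul_mem _ _ (straight K _ m rfl)
  obtain ⟨a, ha, b, hb, rfl⟩ := Submodule.mem_sup.mp hpW
  have ha' : phi K n a = 0 := hle ha
  have hb' : phi K n b = 0 := by
    have : phi K n (a + b) = 0 := hp
    rwa [map_add, ha', zero_add] at this
  rw [indep K b hb hb', add_zero]
  exact ha

lemma dvd_iff (K : Type*) [Field K] (n : ℕ) (x : MvPolynomial (PairIdx n) K) :
    Ideal.Quotient.mk (IY K n) (S K n (n + 1) (n + 2)) ∣ Ideal.Quotient.mk (IY K n) x ↔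
      x ∈ JJ K n := by
  constructor
  · rintro ⟨c, hc⟩
    obtain ⟨c, rfl⟩ := Ideal.Quotient.mk_surjective c
    rw [← map_mul, Ideal.Quotient.eq] at hc
    have := (JJ K n).add_mem (Ideal.mem_sup_left hc) (Ideal.mem_sup_right
      (Ideal.mul_mem_right c _ (Ideal.subset_span (Set.mem_singleton (S K n (n + 1) (n + 2))))))
    simpa using this
  · intro h
    obtain ⟨a, ha, b, hb, rfl⟩ := Submodule.mem_sup.mp h
    rw [map_add, Ideal.Quotient.eq_zero_iff_mem.mpr ha, zero_add]
    exact map_dvd _ (Ideal.mem_span_singleton.mp hb)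

lemma IY_ev (K : Type*) [Field K] {n i j : ℕ} (h : 1 ≤ i ∧ i < j ∧ j ≤ n + 2) :
    ∃ f : MvPolynomial (PairIdx n) K →ₐ[K] K, IY K n ≤ RingHom.ker f ∧
      ∀ a b, 1 ≤ a ∧ a < b ∧ b ≤ n + 2 → f (S K n a b) = if a = i ∧ b = j then 1 else 0 := by
  have hf : ∀ a b, 1 ≤ a ∧ a < b ∧ b ≤ n + 2 →
      (aeval (fun p : PairIdx n => if p.1.1 = i ∧ p.1.2 = j then (1 : K) else 0))
        (S K n a b) = if a = i ∧ b = j then 1 else 0 := by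
    intro a b hab
    rw [S_eq K hab, aeval_X]
  refine ⟨_, Ideal.span_le.mpr ?_, hf⟩
  rintro x ⟨a, b, c, d, h1, h2, h3, h4, h5, rfl⟩
  rw [SetLike.mem_coe, RingHom.mem_ker]
  simp only [map_add, map_sub, map_mul]
  rw [hf _ _ (by omega), hf _ _ (by omega), hf _ _ (by omega), hf _ _ (by omega),
    hf _ _ (by omega), hf _ _ (by omega)]
  simp only [← ite_and, mul_ite, mul_one, mul_zero]
  rw [if_neg (by omega), if_neg (by omega), if_neg (by omega)]
  simp

end Pl

/-- In the quotient ring `R_Y/I_Y` the residue class of the variable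
`S_{n+1,n+2}` is a prime element and does not divide the residue class of any
variable `S_{ij}` with `(i,j) ≠ (n+1,n+2)`. -/
theorem stmt9 (K : Type*) [Field K] [IsAlgClosed K] (n : ℕ) (hn : 2 ≤ n) :
    Prime (Ideal.Quotient.mk (IY K n) (S K n (n + 1) (n + 2))) ∧
    ∀ i j : ℕ, 1 ≤ i → i < j → j ≤ n + 2 → (i, j) ≠ (n + 1, n + 2) →
      ¬ (Ideal.Quotient.mk (IY K n) (S K n (n + 1) (n + 2)) ∣
          Ideal.Quotient.mk (IY K n) (S K n i j)) := by
  haveI hpr : (Pl.JJ K n).IsPrime := by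
    rw [Pl.JJ_eq]; exact RingHom.ker_isPrime _
  refine ⟨⟨?_, ?_, ?_⟩, ?_⟩
  · intro h
    rw [Ideal.Quotient.eq_zero_iff_mem] at h
    obtain ⟨f, hf, hv⟩ := Pl.IY_ev K (n := n) (i := n + 1) (j := n + 2) (by omega)
    have h1 := hv (n + 1) (n + 2) (by omega)
    have h2 : f (S K n (n + 1) (n + 2)) = 0 := hf h
    rw [h2] at h1
    simp at h1
  · intro h
    have h1 := (Pl.dvd_iff K n 1).mp h.dvd
    exact hpr.ne_top ((Ideal.eq_top_iff_one _).mpr h1)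
  · intro a b hab
    obtain ⟨a, rfl⟩ := Ideal.Quotient.mk_surjective a
    obtain ⟨b, rfl⟩ := Ideal.Quotient.mk_surjective b
    rw [← map_mul, Pl.dvd_iff] at hab
    rw [Pl.dvd_iff, Pl.dvd_iff]
    exact hpr.mem_or_mem hab
  · intro i j h1 h2 h3 hne hd
    rw [Pl.dvd_iff] at hd
    obtain ⟨f, hf, hv⟩ := Pl.IY_ev K (n := n) (i := i) (j := j) ⟨h1, h2, h3⟩
    have hle : Pl.JJ K n ≤ RingHom.ker f := by
      refine sup_le hf (Ideal.span_le.mpr ?_)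
      rintro x rfl
      rw [SetLike.mem_coe, RingHom.mem_ker, hv _ _ (by omega), if_neg]
      rintro ⟨rfl, rfl⟩
      exact hne rfl
    have h4 : f (S K n i j) = 0 := hle hd
    rw [hv i j ⟨h1, h2, h3⟩] at h4
    simp at h4
end

section
/- Let K be an algebraically closed field, r ≥ 1 an integer, and n_1, …, n_r ≥ 1 integers. Let R_X be the polynomial ring over K in the variables T_∞ and _sT_{ij} for s = 1, …, r and 0 ≤ i < j ≤ n_s + 2 with i ≤ n_s. For each s let I(s) ⊆ R_X be the ideal generated by the twisted Plücker relations _sT_{ij}·T_∞ − _sT_{i,n_s+1}·_sT_{j,n_s+2} + _sT_{i,n_s+2}·_sT_{j,n_s+1} for 0 ≤ i < j ≤ n_s, together with the Plücker relations _sT_{ij}·_sT_{kl} − _sT_{ik}·_sT_{jl} + _sT_{il}·_sT_{jk} for 0 ≤ i < j < k < l ≤ n_s + 2 with k ≤ n_s. Then the ideal I_X := I(1) + … + I(r) is a prime ideal of R_X. -/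
open MvPolynomial

/-- The index set of the polynomial ring `R_X` in the variables `T_∞` (the
index `none`) and `_sT_{ij}` for `s = 1,…,r` and `0 ≤ i < j ≤ n_s + 2` with
`i ≤ n_s`. -/
abbrev IdxX (r : ℕ) (n : Fin r → ℕ) : Type :=
  Option (Σ s : Fin r, {p : ℕ × ℕ // p.1 < p.2 ∧ p.2 ≤ n s + 2 ∧ p.1 ≤ n s})

/-- The variable `T_∞`. -/
noncomputable def Tinf (K : Type*) [Field K] (r : ℕ) (n : Fin r → ℕ) :
    MvPolynomial (IdxX r n) K := X none

/-- The variable `_sT_{ab}` (junk value `0` for invalid index pairs). -/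
noncomputable def T (K : Type*) [Field K] (r : ℕ) (n : Fin r → ℕ)
    (s : Fin r) (a b : ℕ) : MvPolynomial (IdxX r n) K :=
  if h : a < b ∧ b ≤ n s + 2 ∧ a ≤ n s then X (some ⟨s, ⟨(a, b), h⟩⟩) else 0

/-- The ideal `I_X = I(1) + … + I(r)` where `I(s)` is generated by the twisted
Plücker relations
`_sT_{ij}·T_∞ − _sT_{i,n_s+1}·_sT_{j,n_s+2} + _sT_{i,n_s+2}·_sT_{j,n_s+1}`
(`0 ≤ i < j ≤ n_s`) and the Plücker relations
`_sT_{ij}·_sT_{kl} − _sT_{ik}·_sT_{jl} + _sT_{il}·_sT_{jk}`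
(`0 ≤ i < j < k < l ≤ n_s + 2`, `k ≤ n_s`). -/
noncomputable def IX (K : Type*) [Field K] (r : ℕ) (n : Fin r → ℕ) :
    Ideal (MvPolynomial (IdxX r n) K) :=
  Ideal.span {x : MvPolynomial (IdxX r n) K | ∃ s : Fin r,
    (∃ i j : ℕ, i < j ∧ j ≤ n s ∧
      x = T K r n s i j * Tinf K r n
        - T K r n s i (n s + 1) * T K r n s j (n s + 2)
        + T K r n s i (n s + 2) * T K r n s j (n s + 1)) ∨
    (∃ i j k l : ℕ, i < j ∧ j < k ∧ k < l ∧ l ≤ n s + 2 ∧ k ≤ n s ∧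
      x = T K r n s i j * T K r n s k l - T K r n s i k * T K r n s j l
        + T K r n s i l * T K r n s j k)}


namespace PluckerAux

/-- A non-nesting matrix is determined by its row sums and all but the last column sums. -/
lemma F_eq_min (N : ℕ) (M : ℕ → ℕ → ℕ)
    (nn : ∀ i j k l, i < k → l < j → M i j ≠ 0 → M k l ≠ 0 → False) (a b : ℕ)
    (ha : a ≤ N) (hb : b ≤ N) :
    ∑ i ∈ Finset.range a, ∑ j ∈ Finset.range b, M i j =
      min (∑ i ∈ Finset.range a, ∑ j ∈ Finset.range N, M i j)
        (∑ j ∈ Finset.range b, ∑ i ∈ Finset.range N, M i j) := by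
  have h1 : ∑ i ∈ Finset.range a, ∑ j ∈ Finset.range N, M i j =
      ∑ i ∈ Finset.range a, ∑ j ∈ Finset.range b, M i j +
      ∑ i ∈ Finset.range a, ∑ j ∈ Finset.Ico b N, M i j := by
    rw [← Finset.sum_add_distrib]
    exact Finset.sum_congr rfl fun i _ => (Finset.sum_range_add_sum_Ico _ hb).symm
  have h2 : ∑ j ∈ Finset.range b, ∑ i ∈ Finset.range N, M i j =
      ∑ i ∈ Finset.range a, ∑ j ∈ Finset.range b, M i j +
      ∑ j ∈ Finset.range b, ∑ i ∈ Finset.Ico a N, M i j := by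
    rw [Finset.sum_comm (s := Finset.range a), ← Finset.sum_add_distrib]
    exact Finset.sum_congr rfl fun i _ => (Finset.sum_range_add_sum_Ico _ ha).symm
  have h3 : ∑ i ∈ Finset.range a, ∑ j ∈ Finset.Ico b N, M i j = 0 ∨
      ∑ j ∈ Finset.range b, ∑ i ∈ Finset.Ico a N, M i j = 0 := by
    by_contra hcon
    push Not at hcon
    obtain ⟨c1, c2⟩ := hcon
    obtain ⟨i, hi, c1⟩ := Finset.exists_ne_zero_of_sum_ne_zero c1
    obtain ⟨j, hj, c1⟩ := Finset.exists_ne_zero_of_sum_ne_zero c1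
    obtain ⟨l, hl, c2⟩ := Finset.exists_ne_zero_of_sum_ne_zero c2
    obtain ⟨k, hk, c2⟩ := Finset.exists_ne_zero_of_sum_ne_zero c2
    simp only [Finset.mem_range, Finset.mem_Ico] at hi hj hl hk
    exact nn i j k l (by omega) (by omega) c1 c2
  rw [h1, h2]
  omega

lemma uniq (N : ℕ) (M M' : ℕ → ℕ → ℕ)
    (sM : ∀ i j, M i j ≠ 0 → i < N ∧ j < N)
    (sM' : ∀ i j, M' i j ≠ 0 → i < N ∧ j < N)
    (nn : ∀ i j k l, i < k → l < j → M i j ≠ 0 → M k l ≠ 0 → False)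
    (nn' : ∀ i j k l, i < k → l < j → M' i j ≠ 0 → M' k l ≠ 0 → False)
    (hrow : ∀ i < N, ∑ j ∈ Finset.range N, M i j = ∑ j ∈ Finset.range N, M' i j)
    (hcol : ∀ j, j + 1 < N → ∑ i ∈ Finset.range N, M i j = ∑ i ∈ Finset.range N, M' i j) :
    ∀ i j, M i j = M' i j := by
  have key : ∀ a b, a ≤ N → b ≤ N →
      ∑ i ∈ Finset.range a, ∑ j ∈ Finset.range b, M i j =
      ∑ i ∈ Finset.range a, ∑ j ∈ Finset.range b, M' i j := by
    intro a b ha hb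
    have hR : ∑ i ∈ Finset.range a, ∑ j ∈ Finset.range N, M i j =
        ∑ i ∈ Finset.range a, ∑ j ∈ Finset.range N, M' i j :=
      Finset.sum_congr rfl fun i hi => hrow i (by simp at hi; omega)
    rcases Nat.lt_or_ge b N with h | h
    · rw [F_eq_min N M nn a b ha hb, F_eq_min N M' nn' a b ha hb, hR]
      congr 1
      exact Finset.sum_congr rfl fun j hj => hcol j (by simp at hj; omega)
    · obtain rfl : b = N := by omega
      exact hR
  intro i j
  by_cases h : i < N ∧ j < N
  · have h1 := key (i+1) (j+1) (by omega) (by omega)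
    have h2 := key i (j+1) (by omega) (by omega)
    have h3 := key (i+1) j (by omega) (by omega)
    have h4 := key i j (by omega) (by omega)
    rw [Finset.sum_range_succ, Finset.sum_range_succ _ i, h2, Finset.sum_range_succ,
      Finset.sum_range_succ _ j] at h1
    rw [Finset.sum_range_succ, Finset.sum_range_succ _ i, h4] at h3
    omega
  · have h1 : M i j = 0 := by
      by_contra hc
      exact h (sM _ _ hc)
    have h2 : M' i j = 0 := by
      by_contra hc
      exact h (sM' _ _ hc)
    rw [h1, h2]

section Lead
variable {σ K : Type*} [Field K]

/-- `p` has leading monomial `a` (coefficient one) for the weight `w`. -/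
def Lead (w : σ → ℕ) (p : MvPolynomial σ K) (a : σ →₀ ℕ) : Prop :=
  ∃ q : MvPolynomial σ K, p = monomial a 1 + q ∧
    ∀ b ∈ q.support, Finsupp.weight w b < Finsupp.weight w a

lemma Lead.mul {w : σ → ℕ} {p p' : MvPolynomial σ K} {a a' : σ →₀ ℕ}
    (h : Lead w p a) (h' : Lead w p' a') : Lead w (p * p') (a + a') := by
  classical
  obtain ⟨q, rfl, hq⟩ := h
  obtain ⟨q', rfl, hq'⟩ := h'
  refine ⟨monomial a 1 * q' + q * (monomial a' 1 + q'), ?_, ?_⟩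
  · have : (monomial (a + a') (1 : K)) = monomial a 1 * monomial a' 1 := by
      rw [monomial_mul, one_mul]
    rw [this]; ring
  · intro b hb
    rw [map_add]
    rcases Finset.mem_union.1 (support_add hb) with hb | hb
    · obtain ⟨c, hc, d, hd, rfl⟩ := Finset.mem_add.1 (support_mul _ _ hb)
      have := support_monomial_subset hc
      simp only [Finset.mem_singleton] at this
      subst this
      have := hq' d hd
      rw [map_add]; omega
    · obtain ⟨c, hc, d, hd, rfl⟩ := Finset.mem_add.1 (support_mul _ _ hb)
      have h1 := hq c hc
      rw [map_add]
      rcases Finset.mem_union.1 (support_add hd) with hd | hd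
      · have := support_monomial_subset hd
        simp only [Finset.mem_singleton] at this
        subst this
        omega
      · have := hq' d hd
        omega

lemma Lead.one {w : σ → ℕ} : Lead w (1 : MvPolynomial σ K) 0 :=
  ⟨0, by simp [← C_apply], by simp⟩

lemma Lead.pow {w : σ → ℕ} {p : MvPolynomial σ K} {a : σ →₀ ℕ}
    (h : Lead w p a) (e : ℕ) : Lead w (p ^ e) (e • a) := by
  induction e with
  | zero => simpa using Lead.one
  | succ e ih => rw [pow_succ, succ_nsmul]; exact ih.mul h

lemma Lead.prod {w : σ → ℕ} {ι : Type*} (S : Finset ι) (p : ι → MvPolynomial σ K)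
    (a : ι → σ →₀ ℕ) (h : ∀ i, Lead w (p i) (a i)) :
    Lead w (∏ i ∈ S, p i) (∑ i ∈ S, a i) := by
  classical
  induction S using Finset.induction_on with
  | empty => simpa using Lead.one
  | insert i S hi ih => rw [Finset.prod_insert hi, Finset.sum_insert hi]; exact (h i).mul ih

lemma Lead.coeff_self {w : σ → ℕ} {p : MvPolynomial σ K} {a : σ →₀ ℕ}
    (h : Lead w p a) : coeff a p = 1 := by
  classical
  obtain ⟨q, rfl, hq⟩ := h
  have : coeff a q = 0 := by
    by_contra hc
    exact lt_irrefl _ (hq a (mem_support_iff.2 hc))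
  rw [coeff_add, this, coeff_monomial]; simp

lemma Lead.coeff_other {w : σ → ℕ} {p : MvPolynomial σ K} {a b : σ →₀ ℕ}
    (h : Lead w p a) (hb : b ≠ a) (hw : Finsupp.weight w a ≤ Finsupp.weight w b) :
    coeff b p = 0 := by
  classical
  obtain ⟨q, rfl, hq⟩ := h
  have : coeff b q = 0 := by
    by_contra hc
    exact absurd (hq b (mem_support_iff.2 hc)) (by omega)
  rw [coeff_add, this, coeff_monomial, if_neg (Ne.symm hb), add_zero]

/-- Independence via distinct leading monomials. -/
lemma indep {τ : Type*} (w : σ → ℕ) (φ : MvPolynomial τ K →ₐ[K] MvPolynomial σ K)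
    (ℓ : (τ →₀ ℕ) → (σ →₀ ℕ)) (hl : ∀ m, Lead w (φ (monomial m 1)) (ℓ m))
    (std : (τ →₀ ℕ) → Prop) (inj : ∀ m m', std m → std m' → ℓ m = ℓ m' → m = m')
    (g : MvPolynomial τ K) (hg : ∀ m ∈ g.support, std m) (h0 : φ g = 0) : g = 0 := by
  classical
  by_contra hne
  have hs : g.support.Nonempty := Finset.nonempty_of_ne_empty (by simpa using hne)
  obtain ⟨m, hm, hmax⟩ := g.support.exists_max_image (fun m => Finsupp.weight w (ℓ m)) hs
  have hsum : φ g = ∑ v ∈ g.support, coeff v g • φ (monomial v 1) := by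
    conv_lhs => rw [g.as_sum]
    rw [map_sum]
    refine Finset.sum_congr rfl fun v _ => ?_
    rw [← map_smul, smul_monomial, smul_eq_mul, mul_one]
  have : coeff (ℓ m) (φ g) = coeff m g := by
    rw [hsum, coeff_sum, Finset.sum_eq_single m]
    · rw [coeff_smul, (hl m).coeff_self, smul_eq_mul, mul_one]
    · intro v hv hvm
      rw [coeff_smul, (hl v).coeff_other, smul_zero]
      · intro h
        exact hvm (inj _ _ (hg v hv) (hg m hm) h.symm)
      · exact hmax v hv
    · intro h; exact absurd hm h
  rw [h0, coeff_zero] at this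
  exact (mem_support_iff.1 hm) this.symm

end Lead

variable (K : Type*) [Field K] (r : ℕ) (n : Fin r → ℕ)

abbrev Tgt (r : ℕ) := Option (Fin r × Bool × ℕ)

noncomputable def XX (s : Fin r) (i : ℕ) : MvPolynomial (Tgt r) K :=
  if i ≤ n s then X (some (s, false, i)) else if i = n s + 1 then 1 else 0

noncomputable def YY (s : Fin r) (j : ℕ) : MvPolynomial (Tgt r) K :=
  if j ≤ n s + 1 then X (some (s, true, j)) else X none

noncomputable def img : IdxX r n → MvPolynomial (Tgt r) K
  | none => X none
  | some ⟨s, p⟩ => XX K r n s p.1.1 * YY K r n s p.1.2 - XX K r n s p.1.2 * YY K r n s p.1.1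

noncomputable def phi : MvPolynomial (IdxX r n) K →ₐ[K] MvPolynomial (Tgt r) K :=
  aeval (img K r n)

def wt : Tgt r → ℕ
  | some (_, true, j) => j
  | _ => 0

noncomputable def lead : IdxX r n → (Tgt r →₀ ℕ)
  | none => Finsupp.single none 1
  | some ⟨s, p⟩ => Finsupp.single (some (s, false, p.1.1)) 1 +
      (if p.1.2 ≤ n s + 1 then Finsupp.single (some (s, true, p.1.2)) 1
        else Finsupp.single none 1)

lemma img_lead (v : IdxX r n) : Lead (wt r) (img K r n v) (lead r n v) := by
  classical
  rcases v with _ | ⟨s, ⟨i, j⟩, h1, h2, h3⟩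
  · exact ⟨0, by simp [img, lead, X], by simp⟩
  · simp only at h1 h2 h3
    refine ⟨- (XX K r n s j * YY K r n s i), ?_, ?_⟩
    · simp only [img, lead, sub_eq_add_neg]
      congr 1
      rw [XX, if_pos h3, YY]
      split_ifs <;> simp [X, monomial_mul]
    · intro b hb
      rw [support_neg] at hb
      rw [XX, YY, if_pos (show i ≤ n s + 1 by omega)] at hb
      simp only [lead, map_add, Finsupp.weight_single]
      split_ifs at hb with c1 c2
      · rw [X, X, monomial_mul] at hb
        have := support_monomial_subset hb
        simp only [Finset.mem_singleton] at this
        subst this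
        rw [if_pos (by omega)]
        simp [Finsupp.weight_single, wt, h1]
      · rw [one_mul, X] at hb
        have := support_monomial_subset hb
        simp only [Finset.mem_singleton] at this
        subst this
        rw [if_pos (by omega)]
        simp [Finsupp.weight_single, wt, h1]
      · simp at hb

noncomputable def Lm (m : IdxX r n →₀ ℕ) : Tgt r →₀ ℕ := m.sum fun v e => e • lead r n v

lemma phi_lead (m : IdxX r n →₀ ℕ) : Lead (wt r) (phi K r n (monomial m 1)) (Lm r n m) := by
  rw [phi, aeval_monomial, map_one, one_mul]
  exact Lead.prod _ _ _ fun v => (img_lead K r n v).pow _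

/-- Standard (non-nesting) monomials. -/
def Std (m : IdxX r n →₀ ℕ) : Prop :=
  ∀ s p q, m (some ⟨s, p⟩) ≠ 0 → m (some ⟨s, q⟩) ≠ 0 → p.1.1 < q.1.1 → q.1.2 < p.1.2 → False

variable {r n} in
/-- The exponent matrix. -/
def mat (m : IdxX r n →₀ ℕ) (s : Fin r) (i j : ℕ) : ℕ :=
  if h : i < j ∧ j ≤ n s + 2 ∧ i ≤ n s then m (some ⟨s, ⟨(i, j), h⟩⟩) else 0

lemma mat_add (m m' : IdxX r n →₀ ℕ) (s i j) : mat (m + m') s i j = mat m s i j + mat m' s i j := by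
  unfold mat; split_ifs <;> simp

lemma mat_single_none (e s i j) : mat (Finsupp.single (none : IdxX r n) e) s i j = 0 := by
  unfold mat; split_ifs <;> simp

lemma mat_single_some (e s' p s i j) :
    mat (Finsupp.single (some ⟨s', p⟩ : IdxX r n) e) s i j =
      if s' = s ∧ p.1.1 = i ∧ p.1.2 = j then e else 0 := by
  classical
  obtain ⟨⟨a, b⟩, hp⟩ := p
  unfold mat
  by_cases hs : s' = s
  · subst hs
    split_ifs with h1 h2 h2
    · obtain ⟨_, rfl, rfl⟩ := h2
      simp
    · rw [Finsupp.single_apply, if_neg]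
      intro h
      simp at h
      exact h2 (by simpa using h)
    · obtain ⟨_, rfl, rfl⟩ := h2
      exact absurd hp h1
    · rfl
  · simp only [hs, false_and, if_false]
    split_ifs with h1
    · rw [Finsupp.single_apply, if_neg]
      intro h
      simp at h
      exact hs h.1
    · rfl

lemma Lm_add (m m' : IdxX r n →₀ ℕ) : Lm r n (m + m') = Lm r n m + Lm r n m' := by
  classical
  unfold Lm
  exact Finsupp.sum_add_index' (by simp) (by intros; rw [add_smul])

lemma Lm_single (v : IdxX r n) (e : ℕ) : Lm r n (Finsupp.single v e) = e • lead r n v := by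
  unfold Lm
  exact Finsupp.sum_single_index (by simp)

lemma Lm_row (m : IdxX r n →₀ ℕ) (s : Fin r) (i : ℕ) :
    Lm r n m (some (s, false, i)) = ∑ j ∈ Finset.range (n s + 3), mat m s i j := by
  classical
  induction m using Finsupp.induction_linear with
  | zero => simp [Lm, mat]
  | add f g hf hg => simp only [Lm_add, Finsupp.add_apply, mat_add, Finset.sum_add_distrib, hf, hg]
  | single v e =>
    rw [Lm_single]
    rcases v with _ | ⟨s', ⟨a, b⟩, hp⟩
    · simp [mat_single_none, lead]
    · simp only [mat_single_some]
      simp only at hp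
      by_cases hs : s' = s
      · subst hs
        by_cases hi : a = i
        · subst hi
          simp only [true_and]
          rw [Finset.sum_ite_eq, if_pos (by simp; omega)]
          simp only [lead]
          split_ifs <;> simp
        · simp only [lead]
          split_ifs <;> simp [hi]
      · simp only [lead]
        split_ifs <;> simp [hs]

lemma Lm_col (m : IdxX r n →₀ ℕ) (s : Fin r) (j : ℕ) (hj : j ≤ n s + 1) :
    Lm r n m (some (s, true, j)) = ∑ i ∈ Finset.range (n s + 3), mat m s i j := by
  classical
  induction m using Finsupp.induction_linear with
  | zero => simp [Lm, mat]
  | add f g hf hg => simp only [Lm_add, Finsupp.add_apply, mat_add, Finset.sum_add_distrib, hf, hg]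
  | single v e =>
    rw [Lm_single]
    rcases v with _ | ⟨s', ⟨a, b⟩, hp⟩
    · simp [mat_single_none, lead]
    · simp only [mat_single_some]
      simp only at hp
      by_cases hs : s' = s
      · subst hs
        by_cases hi : b = j
        · subst hi
          simp only [true_and, and_true]
          rw [Finset.sum_ite_eq, if_pos (by simp; omega)]
          simp only [lead]
          rw [if_pos hj]; simp
        · simp only [lead]
          split_ifs <;> simp [hi]
      · simp only [lead]
        split_ifs <;> simp [hs]

lemma Lm_inj (m m' : IdxX r n →₀ ℕ) (h : Std r n m) (h' : Std r n m')
    (he : Lm r n m = Lm r n m') : m = m' := by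
  classical
  have supp : ∀ (m : IdxX r n →₀ ℕ) s i j, mat m s i j ≠ 0 → i < n s + 3 ∧ j < n s + 3 := by
    intro m s i j hm
    unfold mat at hm
    split_ifs at hm with h1
    · omega
    · exact absurd rfl hm
  have nn : ∀ (m : IdxX r n →₀ ℕ) s, Std r n m →
      ∀ i j k l, i < k → l < j → mat m s i j ≠ 0 → mat m s k l ≠ 0 → False := by
    intro m s hm i j k l h1 h2 h3 h4
    unfold mat at h3 h4
    split_ifs at h3 h4 with h5 h6
    · exact hm s _ _ h3 h4 h1 h2
    all_goals simp at h3 h4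
  have hmat : ∀ s i j, mat m s i j = mat m' s i j := fun s =>
    uniq (n s + 3) _ _ (supp m s) (supp m' s) (nn m s h) (nn m' s h')
      (fun i _ => by rw [← Lm_row, ← Lm_row, he])
      (fun j hj => by rw [← Lm_col _ _ _ _ _ (by omega), ← Lm_col _ _ _ _ _ (by omega), he])
  have hsome : ∀ v, m (some v) = m' (some v) := by
    rintro ⟨s, ⟨i, j⟩, hp⟩
    have := hmat s i j
    unfold mat at this
    rw [dif_pos hp, dif_pos hp] at this
    exact this
  have hdec : ∀ m : IdxX r n →₀ ℕ, m = Finsupp.single none (m none) + m.erase none := by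
    intro m; exact (Finsupp.single_add_erase none m).symm
  have her : m.erase none = m'.erase none := by
    ext v
    rcases v with _ | v
    · simp
    · simp [Finsupp.erase_ne, hsome]
  have h0 : m none = m' none := by
    have h1 : Lm r n m none = Lm r n m' none := by rw [he]
    rw [hdec m, hdec m', Lm_add, Lm_add, her, Lm_single, Lm_single] at h1
    simpa [lead] using h1
  ext v
  rcases v with _ | v
  · exact h0
  · exact hsome v

lemma phi_T (s : Fin r) (i j : ℕ) (h : i < j ∧ j ≤ n s + 2 ∧ i ≤ n s) :
    phi K r n (T K r n s i j) =
      XX K r n s i * YY K r n s j - XX K r n s j * YY K r n s i := by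
  rw [T, dif_pos h, phi, aeval_X, img]

lemma IX_le : IX K r n ≤ RingHom.ker (phi K r n) := by
  rw [IX, Ideal.span_le]
  rintro x ⟨s, ⟨i, j, h1, h2, rfl⟩ | ⟨i, j, k, l, h1, h2, h3, h4, h5, rfl⟩⟩
  · simp only [SetLike.mem_coe, RingHom.mem_ker, map_add, map_sub, map_mul]
    rw [phi_T _ _ _ _ _ _ (by omega), phi_T _ _ _ _ _ _ (by omega), phi_T _ _ _ _ _ _ (by omega),
      phi_T _ _ _ _ _ _ (by omega), phi_T _ _ _ _ _ _ (by omega)]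
    have e1 : phi K r n (Tinf K r n) = X none := by rw [Tinf, phi, aeval_X, img]
    have e2 : XX K r n s (n s + 1) = 1 := by simp [XX]
    have e3 : XX K r n s (n s + 2) = 0 := by simp [XX]
    have e4 : YY K r n s (n s + 2) = X none := by simp [YY]
    rw [e1, e2, e3, e4]
    ring
  · simp only [SetLike.mem_coe, RingHom.mem_ker, map_add, map_sub, map_mul]
    rw [phi_T _ _ _ _ _ _ (by omega), phi_T _ _ _ _ _ _ (by omega), phi_T _ _ _ _ _ _ (by omega),
      phi_T _ _ _ _ _ _ (by omega), phi_T _ _ _ _ _ _ (by omega), phi_T _ _ _ _ _ _ (by omega)]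
    ring

/-- Weight used for termination. -/
def w2 : IdxX r n → ℕ
  | none => 0
  | some ⟨_, p⟩ => (p.1.2 - p.1.1) ^ 2

lemma T_eq (s : Fin r) (i j : ℕ) (h : i < j ∧ j ≤ n s + 2 ∧ i ≤ n s) :
    T K r n s i j = X (some ⟨s, ⟨(i, j), h⟩⟩) := dif_pos h

lemma straighten (s : Fin r) (p q : {p : ℕ × ℕ // p.1 < p.2 ∧ p.2 ≤ n s + 2 ∧ p.1 ≤ n s})
    (h1 : p.1.1 < q.1.1) (h2 : q.1.2 < p.1.2) :
    ∃ a b c d : IdxX r n, w2 r n a + w2 r n b < w2 r n (some ⟨s, p⟩) + w2 r n (some ⟨s, q⟩) ∧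
      w2 r n c + w2 r n d < w2 r n (some ⟨s, p⟩) + w2 r n (some ⟨s, q⟩) ∧
      (X (some ⟨s, p⟩) * X (some ⟨s, q⟩) - (X a * X b - X c * X d) :
        MvPolynomial (IdxX r n) K) ∈ IX K r n := by
  obtain ⟨⟨i, l⟩, hp⟩ := p
  obtain ⟨⟨j, k⟩, hq⟩ := q
  simp only at h1 h2 hp hq
  have hik : i < k ∧ k ≤ n s + 2 ∧ i ≤ n s := by omega
  have hjl : j < l ∧ l ≤ n s + 2 ∧ j ≤ n s := by omega
  have hij : i < j ∧ j ≤ n s + 2 ∧ i ≤ n s := by omega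
  have hw : (k - i)^2 + (l - j)^2 < (l - i)^2 + (k - j)^2 := by
    obtain ⟨x, rfl⟩ := Nat.exists_eq_add_of_lt h1
    obtain ⟨y, rfl⟩ := Nat.exists_eq_add_of_lt hq.1
    obtain ⟨z, rfl⟩ := Nat.exists_eq_add_of_lt h2
    have e1 : i + x + 1 + y + 1 - i = x + y + 2 := by omega
    have e2 : i + x + 1 + y + 1 + z + 1 - (i + x + 1) = y + z + 2 := by omega
    have e3 : i + x + 1 + y + 1 + z + 1 - i = x + y + z + 3 := by omega
    have e4 : i + x + 1 + y + 1 - (i + x + 1) = y + 1 := by omega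
    rw [e1, e2, e3, e4]
    nlinarith [Nat.zero_le (x*z), Nat.zero_le x, Nat.zero_le z]
  have hw' : (j - i)^2 + (l - k)^2 < (l - i)^2 + (k - j)^2 := by
    obtain ⟨x, rfl⟩ := Nat.exists_eq_add_of_lt h1
    obtain ⟨y, rfl⟩ := Nat.exists_eq_add_of_lt hq.1
    obtain ⟨z, rfl⟩ := Nat.exists_eq_add_of_lt h2
    have e1 : i + x + 1 - i = x + 1 := by omega
    have e2 : i + x + 1 + y + 1 + z + 1 - (i + x + 1 + y + 1) = z + 1 := by omega
    have e3 : i + x + 1 + y + 1 + z + 1 - i = x + y + z + 3 := by omega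
    have e4 : i + x + 1 + y + 1 - (i + x + 1) = y + 1 := by omega
    rw [e1, e2, e3, e4]
    nlinarith [Nat.zero_le (x*z), Nat.zero_le (x*y), Nat.zero_le (y*z), Nat.zero_le x,
      Nat.zero_le z, Nat.zero_le y]
  by_cases hk : k ≤ n s
  · have hkl : k < l ∧ l ≤ n s + 2 ∧ k ≤ n s := by omega
    refine ⟨some ⟨s, ⟨(i, k), hik⟩⟩, some ⟨s, ⟨(j, l), hjl⟩⟩, some ⟨s, ⟨(i, j), hij⟩⟩,
      some ⟨s, ⟨(k, l), hkl⟩⟩, hw, hw', ?_⟩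
    rw [← T_eq, ← T_eq, ← T_eq, ← T_eq, ← T_eq, ← T_eq]
    refine Ideal.subset_span ⟨s, Or.inr ⟨i, j, k, l, h1, hq.1, h2, hp.2.1, hk, by ring⟩⟩
  · obtain rfl : k = n s + 1 := by omega
    obtain rfl : l = n s + 2 := by omega
    refine ⟨some ⟨s, ⟨(i, n s + 1), hik⟩⟩, some ⟨s, ⟨(j, n s + 2), hjl⟩⟩,
      some ⟨s, ⟨(i, j), hij⟩⟩, none, hw, lt_of_le_of_lt ?_ hw', ?_⟩
    · simp [w2]
    rw [← T_eq, ← T_eq, ← T_eq, ← T_eq, ← T_eq]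
    refine Ideal.subset_span ⟨s, Or.inl ⟨i, j, h1, hq.2.2, ?_⟩⟩
    rw [Tinf]; ring

lemma reduce_add (f f' : MvPolynomial (IdxX r n) K)
    (h : ∃ g, f - g ∈ IX K r n ∧ ∀ m ∈ g.support, Std r n m)
    (h' : ∃ g, f' - g ∈ IX K r n ∧ ∀ m ∈ g.support, Std r n m) (c : K) :
    ∃ g, (f + C c * f') - g ∈ IX K r n ∧ ∀ m ∈ g.support, Std r n m := by
  classical
  obtain ⟨g, hg, hs⟩ := h
  obtain ⟨g', hg', hs'⟩ := h'
  refine ⟨g + C c * g', ?_, ?_⟩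
  · have : f + C c * f' - (g + C c * g') = (f - g) + C c * (f' - g') := by ring
    rw [this]
    exact Ideal.add_mem _ hg (Ideal.mul_mem_left _ _ hg')
  · intro m hm
    rcases Finset.mem_union.1 (support_add hm) with hm | hm
    · exact hs m hm
    · refine hs' m ?_
      rw [mem_support_iff, coeff_C_mul] at hm
      exact mem_support_iff.2 (right_ne_zero_of_mul hm)

lemma reduce_mon (N : ℕ) : ∀ m : IdxX r n →₀ ℕ, Finsupp.weight (w2 r n) m = N →
    ∃ g, (monomial m (1:K)) - g ∈ IX K r n ∧ ∀ m ∈ g.support, Std r n m := by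
  classical
  induction N using Nat.strong_induction_on with
  | _ N ih =>
  intro m hm
  by_cases hstd : Std r n m
  · refine ⟨monomial m 1, by simp, fun m' hm' => ?_⟩
    have := support_monomial_subset hm'
    simp only [Finset.mem_singleton] at this
    rwa [this]
  · unfold Std at hstd
    push Not at hstd
    obtain ⟨s, p, q, hp, hq, h1, h2, -⟩ := hstd
    obtain ⟨a, b, c, d, hab, hcd, hmem⟩ := straighten K r n s p q h1 h2
    set P : IdxX r n := some ⟨s, p⟩ with hP
    set Q : IdxX r n := some ⟨s, q⟩ with hQ
    have hPQ : P ≠ Q := by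
      rintro h
      rw [hP, hQ] at h
      simp at h
      rw [h] at h1
      exact lt_irrefl _ h1
    obtain ⟨m', rfl⟩ : ∃ m', m = Finsupp.single P 1 + Finsupp.single Q 1 + m' := by
      refine ⟨m - (Finsupp.single P 1 + Finsupp.single Q 1), (add_tsub_cancel_of_le ?_).symm⟩
      intro v
      rw [Finsupp.add_apply, Finsupp.single_apply, Finsupp.single_apply]
      split_ifs with e1 e2 e2
      · exact absurd (e1.trans e2.symm) hPQ
      · rw [← e1]; omega
      · rw [← e2]; omega
      · omega
    have hmon : ∀ u v : IdxX r n, monomial (Finsupp.single u 1 + Finsupp.single v 1 + m') (1:K) =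
        X u * X v * monomial m' 1 := by
      intro u v
      simp [X, monomial_mul]
    have hwt : ∀ u v : IdxX r n, Finsupp.weight (w2 r n)
        (Finsupp.single u 1 + Finsupp.single v 1 + m') =
        w2 r n u + w2 r n v + Finsupp.weight (w2 r n) m' := by
      intro u v
      simp [Finsupp.weight_single]
    rw [hwt] at hm
    have r1 := ih _ (by rw [hwt a b]; omega) _ rfl
    have r2 := ih _ (by rw [hwt c d]; omega) _ rfl
    obtain ⟨g, hg, hs⟩ := reduce_add K r n _ _ r1 r2 (-1)
    refine ⟨g, ?_, hs⟩
    have h3 := Ideal.mul_mem_right (monomial m' 1) _ hmem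
    have h4 := Ideal.add_mem _ h3 hg
    convert h4 using 1
    rw [hmon, hmon, hmon]
    simp only [map_neg, map_one]
    ring

lemma reduce (f : MvPolynomial (IdxX r n) K) :
    ∃ g, f - g ∈ IX K r n ∧ ∀ m ∈ g.support, Std r n m := by
  induction f using MvPolynomial.monomial_add_induction_on with
  | C a =>
    have := reduce_add K r n 0 (monomial 0 1) ⟨0, by simp, by simp⟩ (reduce_mon K r n _ 0 rfl) a
    simpa [C_mul_monomial, ← C_apply] using this
  | monomial_add m a f _ _ hf =>
    have := reduce_add K r n f (monomial m 1) hf (reduce_mon K r n _ m rfl) a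
    rw [C_mul_monomial, mul_one, add_comm] at this
    exact this

lemma IX_eq : IX K r n = RingHom.ker (phi K r n) := by
  refine le_antisymm (IX_le K r n) fun f hf => ?_
  obtain ⟨g, hg, hs⟩ := reduce K r n f
  have h1 := IX_le K r n hg
  rw [RingHom.mem_ker] at hf h1
  rw [map_sub, hf, zero_sub, neg_eq_zero] at h1
  have := indep (wt r) (phi K r n) (Lm r n) (phi_lead K r n) (Std r n) (Lm_inj r n) g hs h1
  rwa [this, sub_zero] at hg

end PluckerAux

/-- The ideal `I_X` is a prime ideal of `R_X`. -/
theorem stmt10 (K : Type*) [Field K] [IsAlgClosed K]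
    (r : ℕ) (hr : 1 ≤ r) (n : Fin r → ℕ) (hn : ∀ s, 1 ≤ n s) :
    (IX K r n).IsPrime := by
  rw [PluckerAux.IX_eq]
  exact RingHom.ker_isPrime _
end

section
/- Let K be an algebraically closed field, r ≥ 1 an integer, and n_1, …, n_r ≥ 1 integers. Let R_X be the polynomial ring over K in the variables T_∞ and _sT_{ij} for s = 1, …, r and 0 ≤ i < j ≤ n_s + 2 with i ≤ n_s, and let I_X = I(1) + … + I(r) be the ideal generated, for each s, by the twisted Plücker relations _sT_{ij}·T_∞ − _sT_{i,n_s+1}·_sT_{j,n_s+2} + _sT_{i,n_s+2}·_sT_{j,n_s+1} (0 ≤ i < j ≤ n_s) and the Plücker relations _sT_{ij}·_sT_{kl} − _sT_{ik}·_sT_{jl} + _sT_{il}·_sT_{jk} (0 ≤ i < j < k < l ≤ n_s + 2, k ≤ n_s). Then the ideal I_X + ⟨T_∞⟩ is a prime ideal of R_X. -/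
open MvPolynomial

namespace Stmt11

open scoped MonomialOrder

abbrev Sg (r : ℕ) : Type := (Bool ×ₗ (Fin r ×ₗ ℕ))ᵒᵈ

instance (r : ℕ) : WellFoundedGT (Sg r) := by
  unfold Sg; infer_instance

def v {r : ℕ} (b : Bool) (s : Fin r) (i : ℕ) : Sg r := OrderDual.toDual (toLex (b, toLex (s, i)))

lemma v_inj {r : ℕ} {b b' : Bool} {s s' : Fin r} {i i' : ℕ} :
    v b s i = v b' s' i' ↔ b = b' ∧ s = s' ∧ i = i' := by
  simp [v]

/-- leading exponents -/
noncomputable def e {r : ℕ} (n : Fin r → ℕ) : IdxX r n → (Sg r →₀ ℕ)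
  | none => 0
  | some ⟨s, p⟩ => Finsupp.single (v false s p.1.1) 1 + Finsupp.single (v true s p.1.2) 1

def w {r : ℕ} (n : Fin r → ℕ) : IdxX r n → ℕ
  | none => 0
  | some ⟨_, p⟩ => (p.1.2 - p.1.1) ^ 2

def Std {r : ℕ} (n : Fin r → ℕ) : Set (IdxX r n →₀ ℕ) :=
  {m | m none = 0 ∧ ∀ s (p q : {p : ℕ × ℕ // p.1 < p.2 ∧ p.2 ≤ n s + 2 ∧ p.1 ≤ n s}),
    m (some ⟨s, p⟩) ≠ 0 → m (some ⟨s, q⟩) ≠ 0 → p.1.1 < q.1.1 → q.1.2 < p.1.2 → False}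

noncomputable def ph (K : Type*) [Field K] {r : ℕ} (n : Fin r → ℕ) :
    IdxX r n → MvPolynomial (Sg r) K
  | none => 0
  | some ⟨s, p⟩ => X (v false s p.1.1) * X (v true s p.1.2) -
      (if p.1.2 ≤ n s then X (v false s p.1.2) * X (v true s p.1.1) else 0)

noncomputable abbrev mo (r : ℕ) : MonomialOrder (Sg r) := MonomialOrder.lex

lemma lt_aux {r : ℕ} (s : Fin r) {i j : ℕ} (h : i < j) :
    (Finsupp.single (v false s j) 1 + Finsupp.single (v true s i) 1) ≺[mo r]
    (Finsupp.single (v false s i) 1 + Finsupp.single (v true s j) 1) := by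
  rw [MonomialOrder.lex_lt_iff, Finsupp.Lex.lt_iff]
  refine ⟨v true s j, ?_, ?_⟩
  · intro k hk
    have h1 : k ≠ v true s j := ne_of_lt hk
    have h2 : k ≠ v true s i := by
      rintro rfl
      revert hk
      simp [v, Prod.Lex.toLex_lt_toLex]
      omega
    have h3 : ∀ i, k ≠ v false s i := by
      rintro i rfl
      revert hk
      simp [v, Prod.Lex.toLex_lt_toLex]
    simp [Finsupp.single_apply, h1.symm, h2.symm, (h3 _).symm]
  · have := h.ne
    simp [Finsupp.single_apply, v_inj, this]

lemma XX (K : Type*) [Field K] {r : ℕ} (a b : Sg r) :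
    (X a * X b : MvPolynomial (Sg r) K) = monomial (Finsupp.single a 1 + Finsupp.single b 1) 1 := by
  simp [X, monomial_mul]

lemma ph_degree (K : Type*) [Field K] {r : ℕ} (n : Fin r → ℕ) (p) :
    (mo r).degree (ph K n (some p)) = e n (some p) ∧ ph K n (some p) ≠ 0 := by
  classical
  obtain ⟨s, ⟨⟨i, j⟩, h1, h2, h3⟩⟩ := p
  have hd : (mo r).degree (ph K n (some ⟨s, ⟨⟨i, j⟩, h1, h2, h3⟩⟩)) =
      e n (some ⟨s, ⟨⟨i, j⟩, h1, h2, h3⟩⟩) := by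
    simp only [ph, e, XX]
    split_ifs
    · rw [MonomialOrder.degree_sub_of_lt]
      · simp [MonomialOrder.degree_monomial]
      · simpa [MonomialOrder.degree_monomial] using lt_aux s h1
    · simp [MonomialOrder.degree_monomial]
  refine ⟨hd, ?_⟩
  intro h0
  rw [h0, MonomialOrder.degree_zero] at hd
  have := DFunLike.congr_fun hd (v true s j)
  simp [e, Finsupp.single_apply, v_inj] at this

noncomputable abbrev dl {r : ℕ} (n : Fin r → ℕ) (m : IdxX r n →₀ ℕ) : Sg r →₀ ℕ :=
  Finsupp.linearCombination ℕ (e n) m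

lemma aeval_degree (K : Type*) [Field K] {r : ℕ} (n : Fin r → ℕ) (m : IdxX r n →₀ ℕ)
    (hm : m none = 0) :
    (mo r).degree (aeval (ph K n) (monomial m (1 : K))) = dl n m ∧
      aeval (ph K n) (monomial m (1 : K)) ≠ 0 := by
  rw [aeval_monomial, map_one, one_mul]
  have hs : ∀ i ∈ m.support, ph K n i ^ m i ≠ 0 := by
    intro i hi
    rcases i with _ | i
    · simp [hm] at hi
    · exact pow_ne_zero _ (ph_degree K n i).2
  constructor
  · rw [Finsupp.prod, MonomialOrder.degree_prod hs, dl, Finsupp.linearCombination_apply, Finsupp.sum]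
    refine Finset.sum_congr rfl fun i hi => ?_
    rw [MonomialOrder.degree_pow]
    rcases i with _ | i
    · simp [hm] at hi
    · rw [(ph_degree K n i).1]
  · exact Finset.prod_ne_zero_iff.2 hs

lemma dl_apply {r : ℕ} (n : Fin r → ℕ) (m : IdxX r n →₀ ℕ) (x) :
    dl n m x ≠ 0 ↔ ∃ p, m p ≠ 0 ∧ e n p x ≠ 0 := by
  rw [dl, Finsupp.linearCombination_apply, Finsupp.sum, Finsupp.finsetSum_apply]
  simp

lemma dl_x {r : ℕ} (n : Fin r → ℕ) (m : IdxX r n →₀ ℕ) (s i) :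
    dl n m (v false s i) ≠ 0 ↔ ∃ p : {p : ℕ × ℕ // p.1 < p.2 ∧ p.2 ≤ n s + 2 ∧ p.1 ≤ n s},
      m (some ⟨s, p⟩) ≠ 0 ∧ p.1.1 = i := by
  rw [dl_apply]
  constructor
  · rintro ⟨_ | ⟨s', p⟩, h1, h2⟩
    · simp [e] at h2
    · simp [e, Finsupp.single_apply, v_inj] at h2
      obtain ⟨rfl, h⟩ := h2
      exact ⟨p, h1, h⟩
  · rintro ⟨p, h, rfl⟩
    exact ⟨_, h, by simp [e]⟩

lemma dl_y {r : ℕ} (n : Fin r → ℕ) (m : IdxX r n →₀ ℕ) (s i) :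
    dl n m (v true s i) ≠ 0 ↔ ∃ p : {p : ℕ × ℕ // p.1 < p.2 ∧ p.2 ≤ n s + 2 ∧ p.1 ≤ n s},
      m (some ⟨s, p⟩) ≠ 0 ∧ p.1.2 = i := by
  rw [dl_apply]
  constructor
  · rintro ⟨_ | ⟨s', p⟩, h1, h2⟩
    · simp [e] at h2
    · simp [e, Finsupp.single_apply, v_inj] at h2
      obtain ⟨rfl, h⟩ := h2
      exact ⟨p, h1, h⟩
  · rintro ⟨p, h, rfl⟩
    exact ⟨_, h, by simp [e]⟩

lemma exists_min {r : ℕ} (n : Fin r → ℕ) (m : IdxX r n →₀ ℕ) (hm : m ∈ Std n) (s : Fin r) (i j : ℕ)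
    (hi : dl n m (v false s i) ≠ 0) (hi' : ∀ k < i, dl n m (v false s k) = 0)
    (hj : dl n m (v true s j) ≠ 0) (hj' : ∀ k < j, dl n m (v true s k) = 0) :
    ∃ p : {p : ℕ × ℕ // p.1 < p.2 ∧ p.2 ≤ n s + 2 ∧ p.1 ≤ n s},
      m (some ⟨s, p⟩) ≠ 0 ∧ p.1.1 = i ∧ p.1.2 = j := by
  obtain ⟨p, hp, rfl⟩ := (dl_x n m s i).1 hi
  obtain ⟨q, hq, rfl⟩ := (dl_y n m s j).1 hj
  have h1 : ¬ q.1.1 < p.1.1 := fun h => (dl_x n m s q.1.1).2 ⟨q, hq, rfl⟩ (hi' _ h)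
  have h2 : ¬ p.1.2 < q.1.2 := fun h => (dl_y n m s p.1.2).2 ⟨p, hp, rfl⟩ (hj' _ h)
  by_cases h3 : p.1.1 = q.1.1
  · exact ⟨q, hq, h3.symm, rfl⟩
  by_cases h4 : p.1.2 = q.1.2
  · exact ⟨p, hp, rfl, h4⟩
  exact (hm.2 s p q hp hq (by omega) (by omega)).elim

lemma Std_sub {r : ℕ} (n : Fin r → ℕ) {m m' : IdxX r n →₀ ℕ} (hm : m ∈ Std n) (h : m' ≤ m) :
    m' ∈ Std n := by
  have key : ∀ p, m' p ≠ 0 → m p ≠ 0 := fun p hp => by have := h p; omega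
  refine ⟨?_, fun s p q hp hq => hm.2 s p q (key _ hp) (key _ hq)⟩
  have := h none
  have := hm.1
  omega

lemma dl_inj {r : ℕ} (n : Fin r → ℕ) : Set.InjOn (dl n) (Std n) := by
  classical
  suffices H : ∀ N (m m' : IdxX r n →₀ ℕ), m.degree = N → m ∈ Std n → m' ∈ Std n →
      dl n m = dl n m' → m = m' from fun m hm m' hm' h => H _ m m' rfl hm hm' h
  intro N
  induction N with
  | zero =>
    intro m m' h0 hm hm' h
    have : m = 0 := (Finsupp.degree_eq_zero_iff m).1 h0
    subst this
    symm
    ext p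
    by_contra hp
    rcases p with _ | ⟨s, p⟩
    · exact hp hm'.1
    · have := (dl_x n m' s p.1.1).2 ⟨p, hp, rfl⟩
      rw [← h] at this
      simp [dl] at this
  | succ N ih =>
    intro m m' h0 hm hm' h
    have : ∃ p, m p ≠ 0 := by
      by_contra! hc
      have : m = 0 := by ext p; exact hc p
      simp [this] at h0
    obtain ⟨_ | ⟨s, p⟩, hp⟩ := this
    · exact (hp hm.1).elim
    have hx : ∃ i, dl n m (v false s i) ≠ 0 := ⟨_, (dl_x n m s p.1.1).2 ⟨p, hp, rfl⟩⟩
    have hy : ∃ i, dl n m (v true s i) ≠ 0 := ⟨_, (dl_y n m s p.1.2).2 ⟨p, hp, rfl⟩⟩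
    obtain ⟨q, hq, hq1, hq2⟩ := exists_min n m hm s _ _ (Nat.find_spec hx)
      (fun k hk => not_not.1 (Nat.find_min hx hk)) (Nat.find_spec hy)
      (fun k hk => not_not.1 (Nat.find_min hy hk))
    obtain ⟨q', hq', hq1', hq2'⟩ := exists_min n m' hm' s _ _ (h ▸ Nat.find_spec hx)
      (fun k hk => h ▸ not_not.1 (Nat.find_min hx hk)) (h ▸ Nat.find_spec hy)
      (fun k hk => h ▸ not_not.1 (Nat.find_min hy hk))
    have hqq : q' = q := by
      apply Subtype.ext; apply Prod.ext
      · rw [hq1, hq1']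
      · rw [hq2, hq2']
    subst hqq
    have a1 : m - Finsupp.single (some ⟨s, q'⟩) 1 + Finsupp.single (some ⟨s, q'⟩) 1 = m :=
      tsub_add_cancel_of_le (by rw [Finsupp.single_le_iff]; omega)
    have a2 : m' - Finsupp.single (some ⟨s, q'⟩) 1 + Finsupp.single (some ⟨s, q'⟩) 1 = m' :=
      tsub_add_cancel_of_le (by rw [Finsupp.single_le_iff]; omega)
    rw [← a1, ← a2]
    congr 1
    apply ih
    · rw [← a1] at h0
      simpa using h0
    · exact Std_sub n hm tsub_le_self
    · exact Std_sub n hm' tsub_le_self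
    · rw [← a1, ← a2, dl, dl, map_add, map_add] at h
      exact add_right_cancel h

lemma aeval_inj (K : Type*) [Field K] {r : ℕ} (n : Fin r → ℕ) (g : MvPolynomial (IdxX r n) K)
    (hg : ∀ m ∈ g.support, m ∈ Std n) (h : aeval (ph K n) g = 0) : g = 0 := by
  classical
  by_contra h0
  obtain ⟨m, hm, hmax⟩ := Finset.exists_max_image g.support (fun m => (mo r).toSyn (dl n m))
    (support_nonempty.2 h0)
  have h1 : coeff (dl n m) (aeval (ph K n) g) = 0 := by rw [h, coeff_zero]
  rw [g.as_sum, map_sum, coeff_sum, Finset.sum_eq_single m] at h1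
  · have hh := aeval_degree K n m (hg m hm).1
    have : (monomial m (coeff m g)) = C (coeff m g) * monomial m (1 : K) := by
      rw [C_mul_monomial, mul_one]
    rw [this, map_mul, aeval_C, algebraMap_eq, coeff_C_mul, ← hh.1] at h1
    rcases mul_eq_zero.1 h1 with h2 | h2
    · exact mem_support_iff.1 hm h2
    · exact hh.2 ((mo r).coeff_degree_eq_zero_iff.1 h2)
  · intro b hb hbm
    have hh := aeval_degree K n b (hg b hb).1
    have : (monomial b (coeff b g)) = C (coeff b g) * monomial b (1 : K) := by
      rw [C_mul_monomial, mul_one]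
    rw [this, map_mul, aeval_C, algebraMap_eq, coeff_C_mul]
    rw [(mo r).coeff_eq_zero_of_lt, mul_zero]
    rw [hh.1]
    refine lt_of_le_of_ne (hmax b hb) fun hc => hbm ?_
    exact dl_inj n (hg b hb) (hg m hm) ((mo r).toSyn.injective hc)
  · intro hc; exact (hc hm).elim

noncomputable abbrev J (K : Type*) [Field K] (r : ℕ) (n : Fin r → ℕ) :
    Ideal (MvPolynomial (IdxX r n) K) := IX K r n + Ideal.span {Tinf K r n}

noncomputable abbrev wt {r : ℕ} (n : Fin r → ℕ) (m : IdxX r n →₀ ℕ) : ℕ :=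
  Finsupp.linearCombination ℕ (w n) m

lemma Tinf_mem (K : Type*) [Field K] (r : ℕ) (n : Fin r → ℕ) : Tinf K r n ∈ J K r n :=
  Ideal.mem_sup_right (Ideal.subset_span rfl)

lemma rel1 (K : Type*) [Field K] (r : ℕ) (n : Fin r → ℕ) (s : Fin r) (i j : ℕ)
    (h1 : i < j) (h2 : j ≤ n s) :
    T K r n s i (n s + 2) * T K r n s j (n s + 1) - T K r n s i (n s + 1) * T K r n s j (n s + 2)
      ∈ J K r n := by
  have a : T K r n s i j * Tinf K r n
        - T K r n s i (n s + 1) * T K r n s j (n s + 2)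
        + T K r n s i (n s + 2) * T K r n s j (n s + 1) ∈ J K r n :=
    Ideal.mem_sup_left (Ideal.subset_span ⟨s, Or.inl ⟨i, j, h1, h2, rfl⟩⟩)
  have b := Ideal.mul_mem_left _ (T K r n s i j) (Tinf_mem K r n)
  convert sub_mem a b using 1
  ring

lemma rel2 (K : Type*) [Field K] (r : ℕ) (n : Fin r → ℕ) (s : Fin r) (i j k l : ℕ)
    (h1 : i < j) (h2 : j < k) (h3 : k < l) (h4 : l ≤ n s + 2) (h5 : k ≤ n s) :
    T K r n s i j * T K r n s k l - T K r n s i k * T K r n s j l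
        + T K r n s i l * T K r n s j k ∈ J K r n :=
  Ideal.mem_sup_left (Ideal.subset_span ⟨s, Or.inr ⟨i, j, k, l, h1, h2, h3, h4, h5, rfl⟩⟩)

lemma mono_eq (K : Type*) [Field K] {σ : Type*} (m : σ →₀ ℕ) (p q : σ) :
    monomial (m + Finsupp.single p 1 + Finsupp.single q 1) (1 : K) = monomial m 1 * (X p * X q) := by
  simp [X, monomial_mul, add_assoc]

lemma T_eq (K : Type*) [Field K] (r : ℕ) (n : Fin r → ℕ) (s : Fin r) (a b : ℕ)
    (h : a < b ∧ b ≤ n s + 2 ∧ a ≤ n s) : T K r n s a b = X (some ⟨s, ⟨(a, b), h⟩⟩) := by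
  rw [T, dif_pos h]

lemma straighten (K : Type*) [Field K] (r : ℕ) (n : Fin r → ℕ) (N : ℕ) :
    ∀ m : IdxX r n →₀ ℕ, wt n m = N → monomial m (1 : K) ∈
      (J K r n).restrictScalars K ⊔ restrictSupport K (Std n) := by
  induction N using Nat.strong_induction_on with
  | _ N ih =>
  intro m hN
  by_cases hm : m ∈ Std n
  · exact Submodule.mem_sup_right ((monomial_mem_restrictSupport K).2 (Or.inl hm))
  by_cases h0 : m none = 0
  swap
  · apply Submodule.mem_sup_left
    have a1 : m - Finsupp.single none 1 + Finsupp.single none 1 = m :=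
      tsub_add_cancel_of_le (by rw [Finsupp.single_le_iff]; omega)
    rw [← a1, Submodule.restrictScalars_mem]
    have : monomial (m - Finsupp.single none 1 + Finsupp.single none 1) (1 : K) =
      monomial (m - Finsupp.single none 1) 1 * Tinf K r n := by
        simp [Tinf, X, monomial_mul]
    rw [this]
    exact Ideal.mul_mem_left _ _ (Tinf_mem K r n)
  have : ∃ s, ∃ p q : {p : ℕ × ℕ // p.1 < p.2 ∧ p.2 ≤ n s + 2 ∧ p.1 ≤ n s},
    m (some ⟨s, p⟩) ≠ 0 ∧ m (some ⟨s, q⟩) ≠ 0 ∧ p.1.1 < q.1.1 ∧ q.1.2 < p.1.2 := by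
    by_contra! hc
    exact hm ⟨h0, fun s p q h1 h2 h3 h4 => absurd h4 (not_lt.2 (hc s p q h1 h2 h3))⟩
  obtain ⟨s, ⟨⟨i, l⟩, hil⟩, ⟨⟨j, k⟩, hjk⟩, hp, hq, hij, hkl⟩ := this
  simp only at hij hkl hil hjk
  set p : IdxX r n := some ⟨s, ⟨⟨i, l⟩, hil⟩⟩ with hpd
  set q : IdxX r n := some ⟨s, ⟨⟨j, k⟩, hjk⟩⟩ with hqd
  have hpq : p ≠ q := by
    simp [hpd, hqd]; omega
  obtain ⟨m', rfl⟩ : ∃ m', m = m' + Finsupp.single p 1 + Finsupp.single q 1 := by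
    refine ⟨m - Finsupp.single q 1 - Finsupp.single p 1, ?_⟩
    rw [tsub_add_cancel_of_le, tsub_add_cancel_of_le]
    · rw [Finsupp.single_le_iff]; omega
    · rw [Finsupp.single_le_iff]; simp [Finsupp.single_apply, hpq.symm]; omega
  set p1 : IdxX r n := some ⟨s, ⟨⟨i, k⟩, by omega⟩⟩ with hp1
  set q1 : IdxX r n := some ⟨s, ⟨⟨j, l⟩, by omega⟩⟩ with hq1
  obtain ⟨a, rfl⟩ := Nat.exists_eq_add_of_lt hij
  obtain ⟨b, rfl⟩ := Nat.exists_eq_add_of_lt hjk.1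
  obtain ⟨c, rfl⟩ := Nat.exists_eq_add_of_lt hkl
  have w1 : wt n (m' + Finsupp.single p1 1 + Finsupp.single q1 1) < N := by
    rw [← hN]
    simp only [wt, map_add, Finsupp.linearCombination_single, hp1, hq1, hpd, hqd, w, one_smul]
    simp only [show i + a + 1 + b + 1 - i = a + b + 2 by omega,
      show i + a + 1 + b + 1 + c + 1 - (i + a + 1) = b + c + 2 by omega,
      show i + a + 1 + b + 1 + c + 1 - i = a + b + c + 3 by omega,
      show i + a + 1 + b + 1 - (i + a + 1) = b + 1 by omega]
    nlinarith [Nat.zero_le (a * c)]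
  have i1 := ih _ w1 _ rfl
  rw [mono_eq] at i1 ⊢
  by_cases hkn : i + a + 1 + b + 1 ≤ n s
  · set p2 : IdxX r n := some ⟨s, ⟨⟨i, i + a + 1⟩, by omega⟩⟩ with hp2
    set q2 : IdxX r n := some ⟨s, ⟨⟨i + a + 1 + b + 1, i + a + 1 + b + 1 + c + 1⟩, by omega⟩⟩ with hq2
    have w2 : wt n (m' + Finsupp.single p2 1 + Finsupp.single q2 1) < N := by
      rw [← hN]
      simp only [wt, map_add, Finsupp.linearCombination_single, hp2, hq2, hpd, hqd, w, one_smul]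
      simp only [show i + a + 1 - i = a + 1 by omega,
        show i + a + 1 + b + 1 + c + 1 - (i + a + 1 + b + 1) = c + 1 by omega,
        show i + a + 1 + b + 1 + c + 1 - i = a + b + c + 3 by omega,
        show i + a + 1 + b + 1 - (i + a + 1) = b + 1 by omega]
      nlinarith [Nat.zero_le (a * c), Nat.zero_le (a * b), Nat.zero_le (b * c)]
    have i2 := ih _ w2 _ rfl
    rw [mono_eq] at i2
    have R := rel2 K r n s i (i + a + 1) (i + a + 1 + b + 1) (i + a + 1 + b + 1 + c + 1)
      (by omega) (by omega) (by omega) (by omega) (by omega)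
    rw [T_eq _ _ _ _ _ _ (by omega), T_eq _ _ _ _ _ _ (by omega), T_eq _ _ _ _ _ _ (by omega),
      T_eq _ _ _ _ _ _ (by omega), T_eq _ _ _ _ _ _ (by omega), T_eq _ _ _ _ _ _ (by omega)] at R
    have R' := Submodule.mem_sup_left (T := restrictSupport K (Std n))
      ((Submodule.restrictScalars_mem K _ _).2 (Ideal.mul_mem_left _ (monomial m' (1 : K)) R))
    convert add_mem R' (sub_mem i1 i2) using 1
    ring
  · have e1 : i + a + 1 + b + 1 = n s + 1 := by omega
    have e2 : i + a + 1 + b + 1 + c + 1 = n s + 2 := by omega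
    have R := rel1 K r n s i (i + a + 1) (by omega) (by omega)
    rw [← e1, ← e2] at R
    rw [T_eq _ _ _ _ _ _ (by omega), T_eq _ _ _ _ _ _ (by omega), T_eq _ _ _ _ _ _ (by omega),
      T_eq _ _ _ _ _ _ (by omega)] at R
    have R' := Submodule.mem_sup_left (T := restrictSupport K (Std n))
      ((Submodule.restrictScalars_mem K _ _).2 (Ideal.mul_mem_left _ (monomial m' (1 : K)) R))
    convert add_mem R' i1 using 1
    ring

lemma straighten' (K : Type*) [Field K] (r : ℕ) (n : Fin r → ℕ) (f : MvPolynomial (IdxX r n) K) :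
    f ∈ (J K r n).restrictScalars K ⊔ restrictSupport K (Std n) := by
  rw [f.as_sum]
  refine Submodule.sum_mem _ fun m _ => ?_
  have := Submodule.smul_mem _ (coeff m f) (straighten K r n _ m rfl)
  rwa [smul_monomial, smul_eq_mul, mul_one] at this

lemma J_le (K : Type*) [Field K] (r : ℕ) (n : Fin r → ℕ) :
    J K r n ≤ RingHom.ker (aeval (ph K n)) := by
  refine sup_le ?_ ?_
  · rw [IX, Ideal.span_le]
    rintro x ⟨s, ⟨i, j, h1, h2, rfl⟩ | ⟨i, j, k, l, h1, h2, h3, h4, h5, rfl⟩⟩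
    · rw [T_eq _ _ _ _ _ _ (by omega), T_eq _ _ _ _ _ _ (by omega), T_eq _ _ _ _ _ _ (by omega),
        T_eq _ _ _ _ _ _ (by omega), T_eq _ _ _ _ _ _ (by omega)]
      simp [RingHom.mem_ker, Tinf, ph]
      ring
    · rw [T_eq _ _ _ _ _ _ (by omega), T_eq _ _ _ _ _ _ (by omega), T_eq _ _ _ _ _ _ (by omega),
        T_eq _ _ _ _ _ _ (by omega), T_eq _ _ _ _ _ _ (by omega), T_eq _ _ _ _ _ _ (by omega)]
      have hj : j ≤ n s := by omega
      simp [RingHom.mem_ker, ph, h5, hj]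
      split_ifs <;> ring
  · rw [Ideal.span_le, Set.singleton_subset_iff]
    simp [RingHom.mem_ker, Tinf, ph]

end Stmt11

/-- The ideal `I_X + ⟨T_∞⟩` is a prime ideal of `R_X`. -/
theorem stmt11 (K : Type*) [Field K] [IsAlgClosed K]
    (r : ℕ) (hr : 1 ≤ r) (n : Fin r → ℕ) (hn : ∀ s, 1 ≤ n s) :
    (IX K r n + Ideal.span {Tinf K r n}).IsPrime := by
  have : IX K r n + Ideal.span {Tinf K r n} = RingHom.ker (aeval (Stmt11.ph K n)) := by
    refine le_antisymm (Stmt11.J_le K r n) fun f hf => ?_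
    obtain ⟨a, ha, g, hg, rfl⟩ := Submodule.mem_sup.1 (Stmt11.straighten' K r n f)
    have ha' := Stmt11.J_le K r n ha
    rw [RingHom.mem_ker] at ha' hf
    rw [map_add, ha', zero_add] at hf
    have : g = 0 := Stmt11.aeval_inj K n g (fun m hm => (mem_restrictSupport_iff K).1 hg hm) hf
    rw [this, add_zero]
    exact ha
  rw [this]
  exact RingHom.ker_isPrime _
end
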